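/- Let r > 1 be a real number and let s ≥ 2 be an integer. Then for every positive integer M there exists a number field K with [K:ℚ] = s such that the closure of σ_{r,K}(I_K) has at least M connected components; that is, the supremum of C_{r,K} over all degree-s extensions K/ℚ is infinite. -/

import Mathlib

open NumberField

/-- The ideal divisor function `σ_{r,K}(I) = ∑_{J ∣ I} N(J)^{-r}`. -/
noncomputable def sigmaK (K : Type*) [Field K] [NumberField K] (r : ℝ)
    (I : Ideal (𝓞 K)) : ℝ :=
  ∑' J : {J : Ideal (𝓞 K) // J ∣ I}, (Ideal.absNorm (J : Ideal (𝓞 K)) : ℝ) ^ (-r)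

theorem aux_comp (A : Set ℝ) (M : ℕ) (a : Fin M → ℝ) (ha : ∀ i, a i ∈ A)
    (gap : ∀ i j, i < j → ∃ c, a j < c ∧ c < a i ∧ c ∉ A) :
    (M : Cardinal) ≤ Cardinal.mk (ConnectedComponents A) := by
  have key : ∀ i j, i < j → ConnectedComponents.mk (⟨a i, ha i⟩ : A) ≠
      ConnectedComponents.mk (⟨a j, ha j⟩ : A) := by
    intro i j hij h
    obtain ⟨c, hc1, hc2, hc3⟩ := gap i j hij
    have h1 : (⟨a i, ha i⟩ : A) ∈ connectedComponent (⟨a j, ha j⟩ : A) :=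
      ConnectedComponents.coe_eq_coe'.1 h
    have hp : IsPreconnected (Subtype.val '' (connectedComponent (⟨a j, ha j⟩ : A))) :=
      isPreconnected_connectedComponent.image _ continuous_subtype_val.continuousOn
    have := hp.ordConnected.out ⟨_, mem_connectedComponent, rfl⟩ ⟨_, h1, rfl⟩
      (⟨hc1.le, hc2.le⟩ : c ∈ Set.Icc (a j) (a i))
    obtain ⟨x, -, rfl⟩ := this
    exact hc3 x.2
  have inj : Function.Injective (fun i => ConnectedComponents.mk (⟨a i, ha i⟩ : A)) := by
    intro i j h
    rcases lt_trichotomy i j with h' | h' | h'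
    · exact absurd h (key _ _ h')
    · exact h'
    · exact absurd h.symm (key _ _ h')
  simpa using Cardinal.mk_le_of_injective inj

section sig
variable {K : Type*} [Field K] [NumberField K]

theorem aux_fin {I : Ideal (𝓞 K)} (hI : I ≠ 0) : {J : Ideal (𝓞 K) | J ∣ I}.Finite := by
  have := UniqueFactorizationMonoid.fintypeSubtypeDvd I hI
  exact @Set.toFinite _ {J : Ideal (𝓞 K) | J ∣ I} (Finite.of_fintype {J // J ∣ I})

theorem aux_sigma (r : ℝ) {I : Ideal (𝓞 K)} (hI : I ≠ 0) :
    sigmaK K r I = ∑ J ∈ (aux_fin hI).toFinset, (Ideal.absNorm J : ℝ) ^ (-r) := by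
  unfold sigmaK
  rw [← Finset.tsum_subtype]
  have : ((aux_fin hI).toFinset : Set (Ideal (𝓞 K))) = {J | J ∣ I} := by simp
  exact (Equiv.tsum_eq (Equiv.subtypeEquivRight (by simp))
    (fun J : {J // J ∈ (aux_fin hI).toFinset} => (Ideal.absNorm (J : Ideal (𝓞 K)) : ℝ) ^ (-r)))

theorem aux_lower (r : ℝ) {I P : Ideal (𝓞 K)} (hI : I ≠ 0) (hP : P ≠ 1) (hd : P ∣ I) :
    1 + (Ideal.absNorm P : ℝ) ^ (-r) ≤ sigmaK K r I := by
  classical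
  rw [aux_sigma r hI]
  calc _ = ∑ J ∈ ({1, P} : Finset (Ideal (𝓞 K))), (Ideal.absNorm J : ℝ) ^ (-r) := by
        rw [Finset.sum_pair hP.symm]; simp
    _ ≤ _ := by
        apply Finset.sum_le_sum_of_subset_of_nonneg
        · intro J; simp only [Finset.mem_insert, Finset.mem_singleton]
          rintro (rfl | rfl) <;> simp [hd]
        · intros; positivity

theorem aux_prime (r : ℝ) {P : Ideal (𝓞 K)} (hP : Prime P) :
    sigmaK K r P = 1 + (Ideal.absNorm P : ℝ) ^ (-r) := by
  classical
  rw [aux_sigma r hP.ne_zero]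
  have h1 : P ≠ 1 := fun h => hP.not_isUnit (h ▸ isUnit_one)
  have : (aux_fin hP.ne_zero).toFinset = {1, P} := by
    ext J
    simp only [Set.Finite.mem_toFinset, Set.mem_ofPred_eq, Finset.mem_insert,
      Finset.mem_singleton]
    rw [hP.irreducible.dvd_iff, Ideal.isUnit_iff, associated_iff_eq, Ideal.one_eq_top, eq_comm (a := P)]
  rw [this, Finset.sum_pair h1.symm]; simp

theorem aux_submul (r : ℝ) {I J : Ideal (𝓞 K)} (hI : I ≠ 0) (hJ : J ≠ 0) :
    sigmaK K r (I * J) ≤ sigmaK K r I * sigmaK K r J := by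
  classical
  rw [aux_sigma r hI, aux_sigma r hJ, aux_sigma r (mul_ne_zero hI hJ), Finset.sum_mul_sum,
    ← Finset.sum_product']
  set T := (aux_fin hI).toFinset ×ˢ (aux_fin hJ).toFinset
  calc _ ≤ ∑ L ∈ T.image (fun x => x.1 * x.2), (Ideal.absNorm L : ℝ) ^ (-r) := by
        apply Finset.sum_le_sum_of_subset_of_nonneg
        · intro L hL
          simp only [Set.Finite.mem_toFinset, Set.mem_ofPred_eq] at hL
          obtain ⟨a, b, ha, hb, rfl⟩ := exists_dvd_and_dvd_of_dvd_mul hL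
          exact Finset.mem_image.2 ⟨(a, b), by simp [T, ha, hb], rfl⟩
        · intros; positivity
    _ ≤ ∑ x ∈ T, (Ideal.absNorm (x.1 * x.2) : ℝ) ^ (-r) := by
        apply Finset.sum_image_le_of_nonneg
        intros; positivity
    _ = _ := by
        apply Finset.sum_congr rfl
        intro x _
        rw [map_mul, Nat.cast_mul, Real.mul_rpow (by positivity) (by positivity)]

theorem aux_norm_ge {P : Ideal (𝓞 K)} (hP : Prime P) : 2 ≤ Ideal.absNorm P := by
  have h0 : Ideal.absNorm P ≠ 0 := by
    rw [Ne, Ideal.absNorm_eq_zero_iff]; exact hP.ne_zero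
  have h1 : Ideal.absNorm P ≠ 1 := by
    rw [Ne, Ideal.absNorm_eq_one_iff]
    intro h; exact hP.not_isUnit (Ideal.isUnit_iff.2 h)
  omega

theorem aux_upper_pow (r : ℝ) (hr : 1 < r) {P : Ideal (𝓞 K)} (hP : Prime P) (n : ℕ) :
    sigmaK K r (P ^ n) ≤ Real.exp (2 * (Ideal.absNorm P : ℝ) ^ (-r)) := by
  classical
  rw [aux_sigma r (pow_ne_zero n hP.ne_zero)]
  set x := (Ideal.absNorm P : ℝ) ^ (-r) with hx
  have hx0 : 0 ≤ x := by positivity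
  have hN : (2 : ℝ) ≤ Ideal.absNorm P := by exact_mod_cast aux_norm_ge hP
  have hx1 : x ≤ 1 / 2 := by
    calc x ≤ (Ideal.absNorm P : ℝ) ^ (-1 : ℝ) :=
          Real.rpow_le_rpow_of_exponent_le (by linarith) (by linarith)
      _ = (Ideal.absNorm P : ℝ)⁻¹ := Real.rpow_neg_one _
      _ ≤ 1 / 2 := by rw [one_div]; exact inv_anti₀ (by norm_num) hN
  have h1 : ∑ J ∈ (aux_fin (pow_ne_zero n hP.ne_zero)).toFinset, (Ideal.absNorm J : ℝ) ^ (-r)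
      ≤ ∑ k ∈ Finset.range (n+1), x ^ k := by
    calc _ ≤ ∑ L ∈ (Finset.range (n+1)).image (fun k => P ^ k), (Ideal.absNorm L : ℝ) ^ (-r) := by
          apply Finset.sum_le_sum_of_subset_of_nonneg
          · intro L hL
            simp only [Set.Finite.mem_toFinset, Set.mem_ofPred_eq] at hL
            obtain ⟨k, hk, hk'⟩ := (dvd_prime_pow hP n).1 hL
            rw [associated_iff_eq] at hk'
            exact Finset.mem_image.2 ⟨k, by simp; omega, hk'.symm⟩
          · intros; positivity
      _ ≤ ∑ k ∈ Finset.range (n+1), (Ideal.absNorm (P ^ k) : ℝ) ^ (-r) := by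
          apply Finset.sum_image_le_of_nonneg
          intros; positivity
      _ = _ := by
          apply Finset.sum_congr rfl
          intro k _
          rw [map_pow, Nat.cast_pow, hx, ← Real.rpow_natCast, ← Real.rpow_natCast,
            ← Real.rpow_mul (by positivity), ← Real.rpow_mul (by positivity), mul_comm]
  have h2 : ∑ k ∈ Finset.range (n+1), x ^ k ≤ 1 + 2 * x := by
    have h3 := mul_neg_geom_sum x (n+1)
    have h4 : (1 - x) * ∑ k ∈ Finset.range (n+1), x ^ k ≤ 1 := by
      rw [h3]; linarith [pow_nonneg hx0 (n+1)]
    have h5 : 1 ≤ (1 - x) * (1 + 2 * x) := by nlinarith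
    exact le_of_mul_le_mul_left (h4.trans h5) (by linarith)
  linarith [Real.add_one_le_exp (2 * x)]

theorem aux_upper (r : ℝ) (hr : 1 < r) (I : Ideal (𝓞 K)) (hI : I ≠ 0) :
    ∃ T : Finset (Ideal (𝓞 K)), (∀ P ∈ T, Prime P ∧ P ∣ I) ∧
      sigmaK K r I ≤ Real.exp (2 * ∑ P ∈ T, (Ideal.absNorm P : ℝ) ^ (-r)) := by
  classical
  revert hI
  induction I using UniqueFactorizationMonoid.induction_on_coprime with
  | h0 => intro h; exact absurd rfl h
  | h1 hx =>
    intro h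
    obtain rfl := Ideal.isUnit_iff.1 hx
    refine ⟨∅, by simp, ?_⟩
    rw [aux_sigma r h]
    have : (aux_fin h).toFinset = {(1 : Ideal (𝓞 K))} := by
      ext J
      simp only [Set.Finite.mem_toFinset, Set.mem_ofPred_eq, Finset.mem_singleton]
      rw [← Ideal.one_eq_top, ← isUnit_iff_dvd_one, Ideal.isUnit_iff, Ideal.one_eq_top]
    rw [this]; simp
  | @hpr p i hp =>
    intro h
    rcases Nat.eq_zero_or_pos i with rfl | hi
    · refine ⟨∅, by simp, ?_⟩
      rw [aux_sigma r h]
      have : (aux_fin h).toFinset = {(1 : Ideal (𝓞 K))} := by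
        ext J
        simp only [Set.Finite.mem_toFinset, Set.mem_ofPred_eq, Finset.mem_singleton]
        rw [pow_zero, ← isUnit_iff_dvd_one, Ideal.isUnit_iff, Ideal.one_eq_top]
      rw [this]; simp
    · refine ⟨{p}, ?_, ?_⟩
      · simp only [Finset.mem_singleton, forall_eq]
        exact ⟨hp, dvd_pow_self p hi.ne'⟩
      · simpa using aux_upper_pow r hr hp i
  | @hcp x y hxy hx hy =>
    intro h
    obtain ⟨hx0, hy0⟩ := mul_ne_zero_iff.1 h
    obtain ⟨T, hT, hT'⟩ := hx hx0
    obtain ⟨U, hU, hU'⟩ := hy hy0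
    have hdis : Disjoint T U := by
      rw [Finset.disjoint_left]
      intro P h1 h2
      exact (hT P h1).1.not_isUnit (hxy (hT P h1).2 (hU P h2).2)
    refine ⟨T ∪ U, ?_, ?_⟩
    · intro P hP
      rcases Finset.mem_union.1 hP with h' | h'
      · exact ⟨(hT P h').1, (hT P h').2.mul_right _⟩
      · exact ⟨(hU P h').1, (hU P h').2.mul_left _⟩
    · rw [Finset.sum_union hdis, mul_add, Real.exp_add]
      refine (aux_submul r hx0 hy0).trans ?_
      apply mul_le_mul hT' hU' _ (Real.exp_nonneg _)
      rw [aux_sigma r hy0]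
      exact Finset.sum_nonneg fun _ _ => by positivity

end sig

section fld
variable {K : Type*} [Field K] [NumberField K]

theorem aux_rank : Module.finrank ℤ (𝓞 K) = Module.finrank ℚ K := RingOfIntegers.rank K

theorem aux_ndvd (s : ℕ) (hK : Module.finrank ℚ K = s) {p : ℕ} {P : Ideal (𝓞 K)}
    (hpP : (p : 𝓞 K) ∈ P) : Ideal.absNorm P ∣ p ^ s := by
  have := Ideal.absNorm_dvd_absNorm_of_le ((Ideal.span_singleton_le_iff_mem (I := P)).2 hpP)
  rwa [Ideal.absNorm_span_natCast, aux_rank, hK] at this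

theorem aux_eis (s : ℕ) (hs : 2 ≤ s) (hK : Module.finrank ℚ K = s) (f : Polynomial ℤ)
    (hf : f.Monic) (hd : f.natDegree = s) (α : 𝓞 K) (hα : Polynomial.aeval α f = 0)
    (p : ℕ) (hp : p.Prime) (h1 : ∀ k < s, (p : ℤ) ∣ f.coeff k)
    (h2 : ¬ ((p : ℤ) ^ 2 ∣ f.coeff 0)) (P : Ideal (𝓞 K)) (hP : Prime P) (hpP : (p : 𝓞 K) ∈ P) :
    Ideal.absNorm P = p := by
  have hPp : P.IsPrime := Ideal.isPrime_of_prime hP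
  choose! c hc using h1
  set g : 𝓞 K := ∑ k ∈ Finset.range s, (c k : 𝓞 K) * α ^ k with hg
  have hα2 : α ^ s + p * g = 0 := by
    rw [Polynomial.aeval_eq_sum_range, hd, Finset.sum_range_succ, ← hd, hf.coeff_natDegree, hd] at hα
    rw [← hα, add_comm, hg, Finset.mul_sum]
    congr 1
    · apply Finset.sum_congr rfl
      intro k hk
      rw [hc k (Finset.mem_range.1 hk)]
      simp [mul_assoc]
    · simp
  have hαP : α ∈ P := by
    apply hPp.mem_of_pow_mem s
    rw [eq_neg_of_add_eq_zero_left hα2]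
    exact P.neg_mem (P.mul_mem_right _ hpP)
  have hgP : g ∉ P := by
    intro hgP
    have hc0 : ((c 0 : ℤ) : 𝓞 K) ∈ P := by
      obtain ⟨t, rfl⟩ : ∃ t, s = t + 1 := ⟨s - 1, by omega⟩
      rw [hg, Finset.sum_range_succ'] at hgP
      have : ∑ k ∈ Finset.range t, (c (k+1) : 𝓞 K) * α ^ (k+1) ∈ P :=
        P.sum_mem fun k _ => P.mul_mem_left _ (P.pow_mem_of_mem hαP _ (by omega))
      simpa using (P.add_mem_iff_right this).1 hgP
    have hcop : IsCoprime (p : ℤ) (c 0) := by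
      rw [Prime.coprime_iff_not_dvd (Nat.prime_iff_prime_int.1 hp)]
      intro hdv
      apply h2
      rw [hc 0 (by omega), pow_two]
      exact mul_dvd_mul_left _ hdv
    obtain ⟨a, b, hab⟩ := hcop
    apply hPp.ne_top
    rw [Ideal.eq_top_iff_one]
    have : ((a * p + b * c 0 : ℤ) : 𝓞 K) ∈ P := by
      push_cast
      exact P.add_mem (P.mul_mem_left _ hpP) (P.mul_mem_left _ hc0)
    rw [hab] at this
    simpa using this
  have hps : (p : 𝓞 K) ∈ P ^ s := by
    have : g * p ∈ P ^ s := by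
      have h : g * p = - α ^ s := by linear_combination hα2
      rw [h]
      exact (P ^ s).neg_mem (Ideal.pow_mem_pow hαP s)
    exact (Ideal.IsPrime.mul_mem_pow P this).resolve_left hgP
  have h3 := aux_ndvd s hK hps
  rw [map_pow, Nat.pow_dvd_pow_iff (by omega)] at h3
  rcases (Nat.dvd_prime hp).1 h3 with h | h
  · have := aux_norm_ge hP; omega
  · exact h

theorem aux_inert (s : ℕ) (f : Polynomial ℤ)
    (hf : f.Monic) (hd : f.natDegree = s) (α : 𝓞 K) (hα : Polynomial.aeval α f = 0)
    (p : ℕ) (hp : p.Prime) (h1 : Irreducible (f.map (Int.castRingHom (ZMod p))))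
    (P : Ideal (𝓞 K)) (hP : Prime P) (hpP : (p : 𝓞 K) ∈ P) :
    p ^ s ≤ Ideal.absNorm P := by
  have hPp : P.IsPrime := Ideal.isPrime_of_prime hP
  have : Fact p.Prime := ⟨hp⟩
  have : Fact (Irreducible (f.map (Int.castRingHom (ZMod p)))) := ⟨h1⟩
  have hfin : Finite (𝓞 K ⧸ P) := Ideal.finiteQuotientOfFreeOfNeBot P hP.ne_zero
  have hnt : Nontrivial (𝓞 K ⧸ P) := Ideal.Quotient.nontrivial_iff.2 hPp.ne_top
  have hp0 : ((p : ℕ) : 𝓞 K ⧸ P) = 0 := by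
    rw [← map_natCast (Ideal.Quotient.mk P), Ideal.Quotient.eq_zero_iff_mem]; exact hpP
  have hch : CharP (𝓞 K ⧸ P) p := ringChar.of_eq (CharP.ringChar_of_prime_eq_zero hp hp0)
  have hev : Polynomial.eval₂ (ZMod.castHom (dvd_refl p) (𝓞 K ⧸ P)) (Ideal.Quotient.mk P α)
      (f.map (Int.castRingHom (ZMod p))) = 0 := by
    rw [Polynomial.eval₂_map, RingHom.ext_int ((ZMod.castHom (dvd_refl p) (𝓞 K ⧸ P)).comp
      (Int.castRingHom (ZMod p))) ((Ideal.Quotient.mk P).comp (algebraMap ℤ (𝓞 K))),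
      ← Polynomial.hom_eval₂, ← Polynomial.aeval_def, hα, map_zero]
  let φ := AdjoinRoot.lift _ _ hev
  have hφ : Function.Injective φ := φ.injective
  have hm : (f.map (Int.castRingHom (ZMod p))).Monic := hf.map _
  have hcard : Nat.card (AdjoinRoot (f.map (Int.castRingHom (ZMod p)))) = p ^ s := by
    have : Module.Finite (ZMod p) (AdjoinRoot (f.map (Int.castRingHom (ZMod p)))) :=
      (AdjoinRoot.powerBasis h1.ne_zero).finite
    rw [Module.natCard_eq_pow_finrank (K := ZMod p), (AdjoinRoot.powerBasis h1.ne_zero).finrank,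
      AdjoinRoot.powerBasis_dim, hf.natDegree_map, hd]
    simp
  rw [← hcard, Ideal.absNorm_apply, Submodule.cardQuot_apply]
  exact Nat.card_le_card_of_injective φ hφ

theorem aux_count (s : ℕ) (hK : Module.finrank ℚ K = s) (p : ℕ) (hp : p.Prime)
    (T : Finset (Ideal (𝓞 K))) (hT : ∀ P ∈ T, Prime P ∧ (p : 𝓞 K) ∈ P) : T.card ≤ s := by
  have h1 : ∏ P ∈ T, P ∣ Ideal.span {(p : 𝓞 K)} := by
    apply Finset.prod_primes_dvd
    · intro P hP; exact (hT P hP).1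
    · intro P hP
      rw [Ideal.dvd_span_singleton]; exact (hT P hP).2
  have h2 : Ideal.absNorm (∏ P ∈ T, P) ∣ p ^ s := aux_ndvd s hK (Ideal.dvd_span_singleton.1 h1)
  rw [map_prod] at h2
  have h3 : p ^ T.card ∣ ∏ P ∈ T, Ideal.absNorm P := by
    rw [← Finset.prod_const]
    apply Finset.prod_dvd_prod_of_dvd
    intro P hP
    obtain ⟨k, hk, hk'⟩ := (Nat.dvd_prime_pow hp).1 (aux_ndvd s hK (hT P hP).2)
    rw [hk']
    apply dvd_pow_self
    rintro rfl
    have := aux_norm_ge (hT P hP).1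
    rw [pow_zero] at hk'; omega
  exact (Nat.pow_dvd_pow_iff_le_right hp.one_lt).1 (h3.trans h2)

theorem aux_under {P : Ideal (𝓞 K)} (hP : Prime P) :
    ∃ p : ℕ, p.Prime ∧ (p : 𝓞 K) ∈ P ∧ p ≤ Ideal.absNorm P := by
  have hPp : P.IsPrime := Ideal.isPrime_of_prime hP
  have : P.IsMaximal := hPp.isMaximal hP.ne_zero
  obtain ⟨p, n, hn, h1, h2, h3⟩ := Ideal.exists_prime_and_absNorm_eq_pow P
  refine ⟨p, h2, h1, ?_⟩
  rw [h3]
  exact Nat.le_self_pow hn.ne' p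

theorem aux_above (s : ℕ) (hs : 2 ≤ s) (hK : Module.finrank ℚ K = s) (p : ℕ) (hp : p.Prime) :
    ∃ P : Ideal (𝓞 K), Prime P ∧ (p : 𝓞 K) ∈ P := by
  have : Ideal.span {(p : 𝓞 K)} ≠ ⊤ := by
    rw [Ne, ← Ideal.absNorm_eq_one_iff, Ideal.absNorm_span_natCast, aux_rank, hK]
    exact (Nat.one_lt_pow (by omega) hp.one_lt).ne'
  obtain ⟨P, hP, hle⟩ := Ideal.exists_le_maximal _ this
  have hm : (p : 𝓞 K) ∈ P := (Ideal.span_singleton_le_iff_mem _).1 hle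
  refine ⟨P, ?_, hm⟩
  apply Ideal.prime_of_isPrime _ hP.isPrime
  rintro rfl
  simp at hm
  exact hp.ne_zero hm

end fld


theorem aux_irr (s : ℕ) (hs : 2 ≤ s) (p : ℕ) (hp : p.Prime) :
    ∃ g : Polynomial (ZMod p), g.Monic ∧ g.natDegree = s ∧ Irreducible g := by
  have : Fact p.Prime := ⟨hp⟩
  obtain ⟨α, hα⟩ := Field.exists_primitive_element (ZMod p) (GaloisField p s)
  have hi : IsIntegral (ZMod p) α := Algebra.IsIntegral.isIntegral α
  refine ⟨minpoly (ZMod p) α, minpoly.monic hi, ?_, minpoly.irreducible hi⟩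
  rw [← IntermediateField.adjoin.finrank hi, hα, IntermediateField.finrank_top',
    GaloisField.finrank p (by omega)]

open Polynomial in
theorem aux_poly (s : ℕ) (hs : 2 ≤ s) (Q : Finset ℕ) (hQ : ∀ p ∈ Q, p.Prime) (R : ℕ → Prop) :
    ∃ f : Polynomial ℤ, f.Monic ∧ f.natDegree = s ∧
      (∀ p ∈ Q, R p → (∀ k < s, (p : ℤ) ∣ f.coeff k) ∧ ¬ ((p : ℤ) ^ 2 ∣ f.coeff 0)) ∧
      (∀ p ∈ Q, ¬ R p → Irreducible (f.map (Int.castRingHom (ZMod p)))) := by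
  classical
  have hg : ∀ p : ℕ, ∃ g : Polynomial (ZMod p), p ∈ Q → (g.Monic ∧ g.natDegree = s ∧ Irreducible g) := by
    intro p
    by_cases h : p ∈ Q
    · obtain ⟨g, hg⟩ := aux_irr s hs p (hQ p h)
      exact ⟨g, fun _ => hg⟩
    · exact ⟨0, fun h' => absurd h' h⟩
  choose g hg using hg
  let a : ℕ → ℕ → ℕ := fun k p => if R p then (if k = 0 then p else 0) else ((g p).coeff k).val
  have hc : ∀ k, ∃ c : ℕ, ∀ p ∈ Q, c ≡ a k p [MOD p ^ 2] := by
    intro k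
    have h1 : ∀ p ∈ Q, p ^ 2 ≠ 0 := fun p hp => pow_ne_zero _ (hQ p hp).ne_zero
    have h2 : Set.Pairwise (Q : Set ℕ) (Function.onFun Nat.Coprime (fun p => p ^ 2)) := by
      intro p hp q hq hpq
      exact Nat.Coprime.pow _ _ ((Nat.coprime_primes (hQ p hp) (hQ q hq)).2 hpq)
    exact ⟨_, (Nat.chineseRemainderOfFinset (a k) (fun p => p ^ 2) Q h1 h2).2⟩
  choose c hc using hc
  let l : ℤ[X] := ∑ k ∈ Finset.range s, C (c k : ℤ) * X ^ k
  have hl : l.degree < (s : WithBot ℕ) := by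
    refine (Polynomial.degree_sum_le _ _).trans_lt ?_
    refine (Finset.sup_lt_iff (WithBot.bot_lt_coe s)).2 ?_
    intro k hk
    refine (degree_C_mul_X_pow_le _ _).trans_lt ?_
    exact WithBot.coe_lt_coe.2 (Finset.mem_range.1 hk)
  have hlc : ∀ k < s, (X ^ s + l : ℤ[X]).coeff k = (c k : ℤ) := by
    intro k hk
    simp only [coeff_add, coeff_X_pow, hk.ne, if_false, zero_add, l, finsetSum_coeff,
      coeff_C_mul, mul_ite, mul_one, mul_zero]
    rw [Finset.sum_ite_eq]
    simp [hk]
  have hmon : (X ^ s + l).Monic := monic_X_pow_add hl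
  have hdeg : (X ^ s + l).natDegree = s := by
    rw [natDegree_add_eq_left_of_degree_lt] <;> simp [hl]
  refine ⟨X ^ s + l, hmon, hdeg, ?_, ?_⟩
  · intro p hp hR
    have hpp := hQ p hp
    constructor
    · intro k hk
      rw [hlc k hk]
      have h := (hc k p hp).of_dvd (dvd_pow_self p two_ne_zero)
      have : a k p ≡ 0 [MOD p] := by
        simp only [a, hR, if_true]
        split_ifs <;> simp [Nat.modEq_zero_iff_dvd]
      exact_mod_cast (Nat.modEq_zero_iff_dvd.1 (h.trans this))
    · rw [hlc 0 (by omega)]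
      intro h
      have h : p ^ 2 ∣ c 0 := by exact_mod_cast h
      have h3 := hc 0 p hp
      have h4 : a 0 p = p := by simp [a, hR]
      rw [h4] at h3
      have h5 := (Nat.modEq_zero_iff_dvd.2 h).symm.trans h3
      have h6 := Nat.le_of_dvd hpp.pos (Nat.modEq_zero_iff_dvd.1 h5.symm)
      nlinarith [hpp.two_le]
  · intro p hp hR
    obtain ⟨g1, g2, g3⟩ := hg p hp
    have : Fact p.Prime := ⟨hQ p hp⟩
    have : (X ^ s + l).map (Int.castRingHom (ZMod p)) = g p := by
      ext k
      rcases lt_trichotomy k s with hk | hk | hk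
      · rw [coeff_map, hlc k hk]
        have h := (hc k p hp).of_dvd (dvd_pow_self p two_ne_zero)
        rw [← ZMod.natCast_eq_natCast_iff] at h
        simp [h, a, hR]
      · subst hk
        have h1 := (hmon.map (Int.castRingHom (ZMod p))).coeff_natDegree
        rw [hmon.natDegree_map, hdeg] at h1
        have h2 := g1.coeff_natDegree
        rw [g2] at h2
        rw [h1, h2]
      · rw [coeff_eq_zero_of_natDegree_lt, coeff_eq_zero_of_natDegree_lt]
        · omega
        · rw [hmon.natDegree_map, hdeg]; exact hk
    rw [this]; exact g3

theorem aux_int {K : Type*} [Field K] [NumberField K] (f : Polynomial ℤ) (hf : f.Monic) (x : K)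
    (hx : f.eval₂ (Int.castRingHom K) x = 0) : ∃ α : 𝓞 K, Polynomial.aeval α f = 0 := by
  have hint : IsIntegral ℤ x := ⟨f, hf, hx⟩
  obtain ⟨α, hα⟩ : ∃ α : 𝓞 K, algebraMap (𝓞 K) K α = x := ⟨⟨x, hint⟩, rfl⟩
  refine ⟨α, ?_⟩
  apply RingOfIntegers.coe_injective
  rw [map_zero, ← Polynomial.aeval_algebraMap_apply, hα]
  exact hx

open Polynomial in
theorem aux_field (s : ℕ) (hs : 2 ≤ s) (f : Polynomial ℤ) (hf : f.Monic) (hd : f.natDegree = s)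
    (p : ℕ) (hp : p.Prime) (h1 : ∀ k < s, (p : ℤ) ∣ f.coeff k)
    (h2 : ¬ ((p : ℤ) ^ 2 ∣ f.coeff 0)) :
    ∃ (K : Type) (_ : Field K) (_ : NumberField K), Module.finrank ℚ K = s ∧
      ∃ α : 𝓞 K, Polynomial.aeval α f = 0 := by
  have hpi : Prime (p : ℤ) := Nat.prime_iff_prime_int.1 hp
  have hirr : Irreducible f := by
    have he : f.IsEisensteinAt (Ideal.span {(p : ℤ)}) := by
      refine ⟨?_, ?_, ?_⟩
      · rw [hf.leadingCoeff, Ideal.mem_span_singleton]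
        exact fun h => hpi.not_isUnit (isUnit_of_dvd_one h)
      · intro k hk
        rw [Ideal.mem_span_singleton]; exact h1 k (hd ▸ hk)
      · rw [Ideal.span_singleton_pow, Ideal.mem_span_singleton]; exact h2
    exact he.irreducible ((Ideal.span_singleton_prime hpi.ne_zero).2 hpi) hf.isPrimitive (by omega)
  have hirr' : Irreducible (f.map (algebraMap ℤ ℚ)) :=
    (hf.irreducible_iff_irreducible_map_fraction_map).1 hirr
  let F := f.map (algebraMap ℤ ℚ)
  have : Fact (Irreducible F) := ⟨hirr'⟩
  have hfd : FiniteDimensional ℚ (AdjoinRoot F) := (AdjoinRoot.powerBasis hirr'.ne_zero).finite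
  have hcz : CharZero (AdjoinRoot F) := charZero_of_injective_algebraMap (algebraMap ℚ (AdjoinRoot F)).injective
  have hrk : Module.finrank ℚ (AdjoinRoot F) = s := by
    rw [(AdjoinRoot.powerBasis hirr'.ne_zero).finrank, AdjoinRoot.powerBasis_dim, hf.natDegree_map, hd]
  have hnf : NumberField (AdjoinRoot F) := { to_charZero := hcz, to_finiteDimensional := by convert hfd }
  refine ⟨AdjoinRoot F, inferInstance, hnf, by convert hrk, ?_⟩
  apply aux_int f hf (AdjoinRoot.root F)
  rw [RingHom.ext_int (Int.castRingHom (AdjoinRoot F)) ((AdjoinRoot.of F).comp (algebraMap ℤ ℚ)), ← eval₂_map]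
  exact AdjoinRoot.eval₂_root F

theorem aux_tail (r : ℝ) (hr : 1 < r) (ε : ℝ) (hε : 0 < ε) :
    ∃ N : ℕ, 1 ≤ N ∧ ∀ T : Finset ℕ, (∀ t ∈ T, N < t) → ∑ t ∈ T, (t : ℝ) ^ (-r) ≤ ε := by
  have hsum : Summable (fun n : ℕ => (n : ℝ) ^ (-r)) := Real.summable_nat_rpow.2 (by linarith)
  obtain ⟨S, hS⟩ := summable_iff_vanishing_norm.1 hsum ε hε
  refine ⟨S.sup id + 1, by omega, fun T hT => ?_⟩
  have hd : Disjoint T S := by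
    rw [Finset.disjoint_left]
    intro t ht hs
    have := Finset.le_sup (f := id) hs
    have := hT t ht
    simp only [id] at *
    omega
  exact (le_abs_self _).trans (hS T hd).le

theorem aux_param (r : ℝ) (hr : 1 < r) (s : ℕ) (hs : 2 ≤ s) (M : ℕ) (hM : 0 < M) :
    ∃ (X B : ℕ) (q : ℕ → ℕ), (∀ i, (q i).Prime) ∧ StrictMono q ∧ (∀ i, X < q i) ∧
      (∀ i < M, q i ≤ B) ∧ ∀ i < M, ∀ (T : Finset ℕ) (w : ℕ → ℝ),
      (∀ t ∈ T, (∃ j, i < j ∧ j < M ∧ t = q j ∧ w t ≤ (t : ℝ) ^ (-r)) ∨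
        (X < t ∧ w t ≤ ((t : ℝ) ^ s) ^ (-r)) ∨ (B < t ∧ w t ≤ (t : ℝ) ^ (-r))) →
      s * ∑ t ∈ T, w t ≤ 3 / 16 * (q i : ℝ) ^ (-r) := by
  classical
  have hnx : ∀ n : ℕ, ∃ p, n ≠ 0 → (p.Prime ∧ n < p ∧ p ≤ 2 * n) := by
    intro n
    by_cases h : n = 0
    · exact ⟨0, fun h' => absurd h h'⟩
    · obtain ⟨p, hp⟩ := Nat.exists_prime_lt_and_le_two_mul n h
      exact ⟨p, fun _ => hp⟩
  choose nx hnx using hnx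
  set L : ℕ := 16 * s * M with hL
  have hL1 : 1 ≤ L := Nat.mul_pos (by omega) hM
  have hs0 : (0 : ℝ) < s := by exact_mod_cast (by omega : 0 < s)
  have hM0 : (0 : ℝ) < M := by exact_mod_cast hM
  have hLr : (L : ℝ) = 16 * s * M := by rw [hL]; push_cast; ring
  have hL1r : (1 : ℝ) ≤ L := by exact_mod_cast hL1
  set D : ℕ := (2 * L) ^ M with hD
  have hD1 : 0 < D := by positivity
  have hD1r : (0 : ℝ) < D := by exact_mod_cast hD1
  obtain ⟨X, hX1, hX⟩ := aux_tail r hr ((D : ℝ) ^ (-r) / (16 * s)) (by positivity)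
  have hX1r : (0 : ℝ) < X := by exact_mod_cast hX1
  obtain ⟨B0, hB1, hB⟩ := aux_tail r hr (((D * X : ℕ) : ℝ) ^ (-r) / (16 * s)) (by
    have : (0 : ℝ) < ((D * X : ℕ) : ℝ) := by push_cast; positivity
    positivity)
  obtain ⟨q, q0, qs⟩ : ∃ q : ℕ → ℕ, q 0 = nx X ∧ ∀ i, q (i+1) = nx (L * q i) :=
    ⟨fun i => Nat.rec (nx X) (fun _ y => nx (L * y)) i, rfl, fun i => rfl⟩
  have hq : ∀ i, (q i).Prime ∧ X < q i ∧ q i ≤ (2 * L) ^ (i+1) * X := by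
    intro i
    induction i with
    | zero =>
      obtain ⟨h1, h2, h3⟩ := hnx X (by omega)
      rw [q0]
      refine ⟨h1, h2, h3.trans ?_⟩
      rw [zero_add, pow_one]
      exact Nat.mul_le_mul_right _ (by omega)
    | succ i ih =>
      obtain ⟨h1, h2, h3⟩ := ih
      have h0 : L * q i ≠ 0 := Nat.mul_ne_zero (by omega) h1.ne_zero
      obtain ⟨g1, g2, g3⟩ := hnx _ h0
      rw [qs]
      refine ⟨g1, ?_, ?_⟩
      · have : q i ≤ L * q i := Nat.le_mul_of_pos_left _ hL1
        omega
      · calc _ ≤ 2 * (L * q i) := g3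
          _ = (2 * L) * q i := by ring
          _ ≤ (2 * L) * ((2 * L) ^ (i+1) * X) := Nat.mul_le_mul_left _ h3
          _ = _ := by ring
  have hstep : ∀ i, L * q i < q (i+1) := by
    intro i
    rw [qs]
    exact (hnx _ (Nat.mul_ne_zero (by omega) (hq i).1.ne_zero)).2.1
  have hmono : StrictMono q := strictMono_nat_of_lt_succ fun i =>
    (Nat.le_mul_of_pos_left _ hL1).trans_lt (hstep i)
  have hqD : ∀ i < M, q i ≤ D * X := fun i hi => (hq i).2.2.trans
    (Nat.mul_le_mul_right _ (Nat.pow_le_pow_right (by omega) hi))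
  refine ⟨X, max B0 (D * X), q, fun i => (hq i).1, hmono, fun i => (hq i).2.1,
    fun i hi => (hqD i hi).trans (le_max_right _ _), ?_⟩
  intro i hi T w hT
  have hqi0 : (0 : ℝ) < (q i : ℕ) := by exact_mod_cast (hq i).1.pos
  set Z : ℝ := ((q i : ℕ) : ℝ) ^ (-r) with hZ
  have hDXZ : (D : ℝ) ^ (-r) * (X : ℝ) ^ (-r) ≤ Z := by
    rw [← Real.mul_rpow (by positivity) (by positivity)]
    apply Real.rpow_le_rpow_of_nonpos hqi0 _ (by linarith)
    exact_mod_cast hqD i hi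
  let IM : Finset ℕ := (Finset.Ioo i M).image q
  let A : ℕ → ℝ := fun t => if t ∈ IM then (t : ℝ) ^ (-r) else 0
  let b : ℕ → ℝ := fun t => if X < t then (X : ℝ) ^ (-r) * (t : ℝ) ^ (-r) else 0
  let c : ℕ → ℝ := fun t => if B0 < t then (t : ℝ) ^ (-r) else 0
  have hA0 : ∀ t, 0 ≤ A t := fun t => by simp only [A]; split_ifs <;> positivity
  have hb0 : ∀ t, 0 ≤ b t := fun t => by simp only [b]; split_ifs <;> positivity
  have hc0 : ∀ t, 0 ≤ c t := fun t => by simp only [c]; split_ifs <;> positivity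
  have hpt : ∀ t ∈ T, w t ≤ A t + b t + c t := by
    intro t ht
    rcases hT t ht with ⟨j, hij, hjM, rfl, hw⟩ | ⟨hXt, hw⟩ | ⟨hBt, hw⟩
    · have : A (q j) = (q j : ℝ) ^ (-r) := by
        simp only [A]
        rw [if_pos (Finset.mem_image.2 ⟨j, Finset.mem_Ioo.2 ⟨hij, hjM⟩, rfl⟩)]
      linarith [hb0 (q j), hc0 (q j)]
    · have h1 : b t = (X : ℝ) ^ (-r) * (t : ℝ) ^ (-r) := by simp only [b, if_pos hXt]
      have hXt' : (X : ℝ) ≤ t := by exact_mod_cast hXt.le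
      have ht1 : (1 : ℝ) ≤ t := by exact_mod_cast (by omega : 1 ≤ t)
      have h2 : ((t : ℝ) ^ s) ^ (-r) ≤ (X : ℝ) ^ (-r) * (t : ℝ) ^ (-r) := by
        rw [← Real.mul_rpow (by positivity) (by positivity)]
        apply Real.rpow_le_rpow_of_nonpos (by positivity) _ (by linarith)
        calc (X : ℝ) * t ≤ t * t := by gcongr
          _ = (t : ℝ) ^ 2 := by ring
          _ ≤ (t : ℝ) ^ s := pow_le_pow_right₀ ht1 hs
      linarith [hA0 t, hc0 t]
    · have : c t = (t : ℝ) ^ (-r) := by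
        simp only [c]; rw [if_pos (lt_of_le_of_lt (le_max_left _ _) hBt)]
      linarith [hA0 t, hb0 t]
  have hAs : ∑ t ∈ T, A t ≤ Z / (16 * s) := by
    calc ∑ t ∈ T, A t = ∑ t ∈ T.filter (· ∈ IM), (t : ℝ) ^ (-r) := by
          rw [Finset.sum_filter]
      _ ≤ ∑ t ∈ IM, (t : ℝ) ^ (-r) := by
          apply Finset.sum_le_sum_of_subset_of_nonneg
          · intro t ht; exact (Finset.mem_filter.1 ht).2
          · intros; positivity
      _ ≤ IM.card • (Z / L) := by
          apply Finset.sum_le_card_nsmul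
          intro t ht
          obtain ⟨j, hj, rfl⟩ := Finset.mem_image.1 ht
          have hj := (Finset.mem_Ioo.1 hj).1
          have h1 : L * q i ≤ q j := (hstep i).le.trans (hmono.monotone hj)
          calc (q j : ℝ) ^ (-r) ≤ ((L : ℝ) * q i) ^ (-r) := by
                apply Real.rpow_le_rpow_of_nonpos (by positivity) _ (by linarith)
                exact_mod_cast h1
            _ = (L : ℝ) ^ (-r) * Z := by
                rw [Real.mul_rpow (by positivity) (by positivity)]
            _ ≤ (L : ℝ) ^ (-1 : ℝ) * Z := by
                gcongr
            _ = Z / L := by rw [Real.rpow_neg_one]; ring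
      _ ≤ M * (Z / L) := by
          rw [nsmul_eq_mul]
          gcongr
          calc IM.card ≤ (Finset.Ioo i M).card := Finset.card_image_le
            _ ≤ M := by rw [Nat.card_Ioo]; omega
      _ = Z / (16 * s) := by rw [hLr]; field_simp
  have hbs : ∑ t ∈ T, b t ≤ Z / (16 * s) := by
    calc ∑ t ∈ T, b t = (X : ℝ) ^ (-r) * ∑ t ∈ T.filter (X < ·), (t : ℝ) ^ (-r) := by
          rw [Finset.mul_sum, Finset.sum_filter]
      _ ≤ (X : ℝ) ^ (-r) * ((D : ℝ) ^ (-r) / (16 * s)) := by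
          gcongr
          exact hX _ fun t ht => (Finset.mem_filter.1 ht).2
      _ = (D : ℝ) ^ (-r) * (X : ℝ) ^ (-r) / (16 * s) := by ring
      _ ≤ _ := by gcongr
  have hcs : ∑ t ∈ T, c t ≤ Z / (16 * s) := by
    calc ∑ t ∈ T, c t = ∑ t ∈ T.filter (B0 < ·), (t : ℝ) ^ (-r) := by
          rw [Finset.sum_filter]
      _ ≤ ((D * X : ℕ) : ℝ) ^ (-r) / (16 * s) := hB _ fun t ht => (Finset.mem_filter.1 ht).2
      _ = (D : ℝ) ^ (-r) * (X : ℝ) ^ (-r) / (16 * s) := by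
          push_cast; rw [Real.mul_rpow (by positivity) (by positivity)]
      _ ≤ _ := by gcongr
  have := Finset.sum_le_sum hpt
  rw [Finset.sum_add_distrib, Finset.sum_add_distrib] at this
  calc s * ∑ t ∈ T, w t ≤ s * (Z / (16 * s) + Z / (16 * s) + Z / (16 * s)) := by
        gcongr; linarith
    _ = 3 / 16 * Z := by field_simp; ring

theorem aux_exp (y Z : ℝ) (hZ : Z ≤ 1) (hy0 : 0 ≤ y) (hy : y ≤ 3 / 16 * Z) :
    Real.exp (2 * y) ≤ 1 + 3 / 4 * Z := by
  have h := Real.abs_exp_sub_one_sub_id_le (x := 2 * y) (by rw [abs_le]; constructor <;> linarith)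
  have h1 := (abs_le.1 h).2
  nlinarith

/-- For fixed real `r > 1` and integer `s ≥ 2`, the number of connected components of the
closure of the image of `σ_{r,K}` is unbounded as `K` ranges over degree-`s` extensions of
`ℚ`: for every `M` there is a degree-`s` number field `K` with at least `M` components. -/
theorem stmt5 (r : ℝ) (hr : 1 < r) (s : ℕ) (hs : 2 ≤ s) :
    ∀ M : ℕ, 0 < M →
      ∃ (K : Type) (_ : Field K) (_ : NumberField K),
        Module.finrank ℚ K = s ∧
        (M : Cardinal) ≤ Cardinal.mk (ConnectedComponents
          ↥(closure (sigmaK K r '' {I : Ideal (𝓞 K) | I ≠ 0}))) := by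
  classical
  intro M hM
  obtain ⟨X, B, q, hqp, hqm, hqX, hqB, hbound⟩ := aux_param r hr s hs M hM
  let R : ℕ → Prop := fun p => p ≤ X ∨ ∃ j < M, p = q j
  let Q : Finset ℕ := (Finset.range (B+1)).filter Nat.Prime
  have hQ : ∀ p, p ∈ Q ↔ p ≤ B ∧ p.Prime := by
    intro p; simp only [Q, Finset.mem_filter, Finset.mem_range]; rw [Nat.lt_succ_iff]
  have hXB : X ≤ B := (hqX 0).le.trans (hqB 0 hM)
  obtain ⟨f, hf, hd, hR, hI⟩ := aux_poly s hs Q (fun p hp => ((hQ p).1 hp).2) R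
  have hqR : ∀ j < M, R (q j) := fun j hj => Or.inr ⟨j, hj, rfl⟩
  have hqQ : ∀ j < M, q j ∈ Q := fun j hj => (hQ _).2 ⟨hqB j hj, hqp j⟩
  have h00 := hR (q 0) (hqQ 0 hM) (hqR 0 hM)
  obtain ⟨K, _, _, hK, α, hα⟩ := aux_field s hs f hf hd (q 0) (hqp 0) h00.1 h00.2
  refine ⟨K, inferInstance, inferInstance, hK, ?_⟩
  have hram : ∀ p, p ≤ B → p.Prime → R p → ∀ P : Ideal (𝓞 K), Prime P → (p : 𝓞 K) ∈ P →
      Ideal.absNorm P = p := by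
    intro p hpB hp hRp P hP hpP
    obtain ⟨g1, g2⟩ := hR p ((hQ p).2 ⟨hpB, hp⟩) hRp
    exact aux_eis s hs hK f hf hd α hα p hp g1 g2 P hP hpP
  -- membership
  have hmem : ∀ i < M, 1 + (q i : ℝ) ^ (-r) ∈ sigmaK K r '' {I : Ideal (𝓞 K) | I ≠ 0} := by
    intro i hi
    obtain ⟨P, hP, hpP⟩ := aux_above s hs hK (q i) (hqp i)
    refine ⟨P, hP.ne_zero, ?_⟩
    rw [aux_prime r hP, hram _ (hqB i hi) (hqp i) (hqR i hi) P hP hpP]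
  -- dichotomy
  have hdich : ∀ i < M, ∀ x ∈ sigmaK K r '' {I : Ideal (𝓞 K) | I ≠ 0},
      x ≤ 1 + 3 / 4 * (q i : ℝ) ^ (-r) ∨ 1 + (q i : ℝ) ^ (-r) ≤ x := by
    rintro i hi x ⟨I, hI0, rfl⟩
    have hI0 : I ≠ 0 := hI0
    have hqi1 : (1 : ℝ) ≤ q i := by exact_mod_cast (hqp i).one_le
    by_cases hcase : ∃ P : Ideal (𝓞 K), Prime P ∧ P ∣ I ∧ ∃ p : ℕ, p.Prime ∧ (p : 𝓞 K) ∈ P ∧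
        (p ≤ X ∨ ∃ k ≤ i, p = q k)
    · right
      obtain ⟨P, hP, hPI, p, hp, hpP, hpc⟩ := hcase
      have hpq : p ≤ q i := by
        rcases hpc with h | ⟨k, hk, rfl⟩
        · exact h.trans (hqX i).le
        · exact hqm.monotone hk
      have hRp : R p := by
        rcases hpc with h | ⟨k, hk, rfl⟩
        · exact Or.inl h
        · exact hqR k (by omega)
      have hn := hram p (hpq.trans (hqB i hi)) hp hRp P hP hpP
      have h1 := aux_lower r hI0 (fun h => hP.not_isUnit (by rw [h]; exact isUnit_one)) hPI
      rw [hn] at h1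
      have h2 : (q i : ℝ) ^ (-r) ≤ (p : ℝ) ^ (-r) :=
        Real.rpow_le_rpow_of_nonpos (by exact_mod_cast hp.pos) (by exact_mod_cast hpq) (by linarith)
      linarith
    · left
      push Not at hcase
      obtain ⟨T, hT, hσ⟩ := aux_upper r hr I hI0
      have hu : ∀ P : Ideal (𝓞 K), ∃ p : ℕ, P ∈ T → (p.Prime ∧ (p : 𝓞 K) ∈ P ∧ p ≤ Ideal.absNorm P) := by
        intro P
        by_cases h : P ∈ T
        · obtain ⟨p, hp⟩ := aux_under (hT P h).1
          exact ⟨p, fun _ => hp⟩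
        · exact ⟨0, fun h' => absurd h' h⟩
      choose u hu using hu
      let w : ℕ → ℝ := fun p => if R p ∨ B < p then (p : ℝ) ^ (-r) else ((p : ℝ) ^ s) ^ (-r)
      have hw0 : ∀ p, 0 ≤ w p := fun p => by simp only [w]; split_ifs <;> positivity
      have hNw : ∀ P ∈ T, (Ideal.absNorm P : ℝ) ^ (-r) ≤ w (u P) := by
        intro P hPT
        obtain ⟨g1, g2, g3⟩ := hu P hPT
        have hpos : (0 : ℝ) < u P := by exact_mod_cast g1.pos
        simp only [w]
        split_ifs with h
        · exact Real.rpow_le_rpow_of_nonpos hpos (by exact_mod_cast g3) (by linarith)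
        · push Not at h
          apply Real.rpow_le_rpow_of_nonpos (by positivity) _ (by linarith)
          exact_mod_cast aux_inert s f hf hd α hα (u P) g1
            (hI _ ((hQ _).2 ⟨h.2, g1⟩) h.1) P (hT P hPT).1 g2
      have hsum : ∑ P ∈ T, (Ideal.absNorm P : ℝ) ^ (-r) ≤ s * ∑ p ∈ T.image u, w p := by
        rw [← Finset.sum_fiberwise_of_maps_to (g := u) (t := T.image u)
          (fun P hP => Finset.mem_image_of_mem _ hP), Finset.mul_sum]
        apply Finset.sum_le_sum
        intro p hp
        obtain ⟨P0, hP0, rfl⟩ := Finset.mem_image.1 hp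
        calc _ ≤ (T.filter (fun P => u P = u P0)).card • w (u P0) := by
              apply Finset.sum_le_card_nsmul
              intro P hP
              obtain ⟨h1, h2⟩ := Finset.mem_filter.1 hP
              rw [← h2]; exact hNw P h1
          _ ≤ s * w (u P0) := by
              rw [nsmul_eq_mul]
              apply mul_le_mul_of_nonneg_right _ (hw0 _)
              have := aux_count s hK (u P0) (hu P0 hP0).1 (T.filter (fun P => u P = u P0)) (by
                intro P hP
                obtain ⟨h1, h2⟩ := Finset.mem_filter.1 hP
                exact ⟨(hT P h1).1, h2 ▸ (hu P h1).2.1⟩)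
              exact_mod_cast this
      have hfin := hbound i hi (T.image u) w (by
        intro t ht
        obtain ⟨P, hP, rfl⟩ := Finset.mem_image.1 ht
        obtain ⟨g1, g2, g3⟩ := hu P hP
        obtain ⟨c1, c2⟩ := hcase P (hT P hP).1 (hT P hP).2 (u P) g1 g2
        by_cases hB : B < u P
        · right; right
          refine ⟨hB, ?_⟩
          simp only [w]; rw [if_pos (Or.inr hB)]
        · by_cases hRu : R (u P)
          · left
            obtain h | ⟨j, hj, hj'⟩ := hRu
            · omega
            · refine ⟨j, ?_, hj, hj', ?_⟩
              · by_contra hij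
                exact c2 j (by omega) hj'
              · simp only [w]; rw [if_pos (Or.inl (Or.inr ⟨j, hj, hj'⟩))]
          · right; left
            refine ⟨c1, ?_⟩
            simp only [w]; rw [if_neg (not_or.2 ⟨hRu, hB⟩)])
      refine hσ.trans (aux_exp _ _ ?_ ?_ (hsum.trans hfin))
      · exact Real.rpow_le_one_of_one_le_of_nonpos hqi1 (by linarith)
      · exact Finset.sum_nonneg fun _ _ => by positivity
  apply aux_comp _ M (fun i => 1 + (q i : ℝ) ^ (-r))
  · intro i; exact subset_closure (hmem i i.2)
  · intro i j hij
    have hi0 : (0 : ℝ) < q i := by exact_mod_cast (hqp i).pos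
    have hZ : (0 : ℝ) < (q i : ℝ) ^ (-r) := Real.rpow_pos_of_pos hi0 _
    have hlt : (q j : ℝ) ^ (-r) < (q i : ℝ) ^ (-r) :=
      Real.rpow_lt_rpow_of_neg hi0 (by exact_mod_cast hqm hij) (by linarith)
    refine ⟨1 + 7 / 8 * (q i : ℝ) ^ (-r), ?_, by linarith, ?_⟩
    · rcases hdich i i.2 _ (hmem j j.2) with h | h <;> linarith
    · have hcl : closure (sigmaK K r '' {I : Ideal (𝓞 K) | I ≠ 0}) ⊆
          Set.Iic (1 + 3 / 4 * (q i : ℝ) ^ (-r)) ∪ Set.Ici (1 + (q i : ℝ) ^ (-r)) :=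
        closure_minimal (fun x hx => hdich i i.2 x hx) (isClosed_Iic.union isClosed_Ici)
      intro hmm
      rcases hcl hmm with h | h
      · have := Set.mem_Iic.1 h; linarith
      · have := Set.mem_Ici.1 h; linarith
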